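/- Every discrete bidding game with a Müller objective and advantage-based tie-breaking is determined: from every configuration, either Player 1 or Player 2 has a winning strategy. -/

import Mathlib

/-!
The proof works with an abstract concurrent game in which each position `q` carries, for each
player, the family `Eff q` of sets of successor positions into which that player can force the next
position by committing to one action.  Positions are preordered by their worth to Player 1, and only
upward closed targets `X` matter.  Two facts about advantage-based bidding are needed
(`adv_arena`): the set of positions from which Player 1 forces an upward closed `X` in one round is
again upward closed, and from every other position Player 2 forces the complement of `X`.  Both
come from the linear order of budgets in which the advantage is worth half a unit, i.e. from the
level `2 * B1 + 1` (if Player 1 holds the advantage) or `2 * B1` (otherwise).  For an upward closed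
target, a round is described by two monotone predicates on levels, and a case analysis on the
largest affordable bid gives the local determinacy (`cell_det`).

Local determinacy is lifted to Müller objectives by induction on a set `U` of vertices
(`Arena.det`): the game is stopped when the path leaves `U`, and is then decided by an upward
closed set `X`.  If `U ∈ F` (the other case is dual), let `K` be the complement of the largest
downward closed set on which Player 2 wins.  For `u ∈ U`, consider the game on `U \ {u}` in which
reaching `u` is good for Player 1 exactly if he can force `K` from there.  Player 2 wins the
original game wherever he wins this one, because after a bad visit to `u` he can force the
complement of `K`; so by maximality Player 1 wins this game from all of `K`.  Playing these games
one after the other, for each `u` infinitely often, wins from `K`: either some stage leaves `U`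
into `X`, or some stage lasts forever and is won by itself, or every vertex of `U`, and no other, is visited infinitely often.
-/

/-! # Discrete bidding games -/

namespace Bid

/-- A tie-breaking mechanism with a set `S` of states.  When a tie occurs in
state `s`, Player `chooser s` selects the winner of the bidding from the
nonempty set `opts s` (a deterministic mechanism has a singleton `opts s`, so
the choice is forced).  After each bidding the state is updated by `update`
from the outcome of the bidding: whether a tie occurred, the winner, the
winning bid, and the vertex the winner moved to.  Player 1 is `0 : Fin 2`,
Player 2 is `1 : Fin 2`. -/
structure Mech (V : Type) where
  S : Type
  opts : S → Set (Fin 2)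
  opts_nonempty : ∀ s, (opts s).Nonempty
  chooser : S → Fin 2
  update : S → Bool → Fin 2 → ℕ → V → S

/-- A discrete bidding game: a finite directed graph in which every vertex has
an outgoing edge, a total budget `N`, a tie-breaking mechanism, and an
objective for Player 1 on infinite vertex sequences. -/
structure Game (V : Type) where
  E : V → V → Prop
  succ_exists : ∀ v, ∃ u, E v u
  N : ℕ
  M : Mech V
  obj : (ℕ → V) → Prop

/-- A configuration `⟨v, B1, B2, s⟩`: token position, budgets, mechanism state. -/
structure Conf (V S : Type) where
  v : V
  B1 : ℕ
  B2 : ℕ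
  s : S

/-- A round of the game, as recorded in histories: the configuration and the
two bids. -/
abbrev Round (V S : Type) := Conf V S × ℕ × ℕ

abbrev Hist (V S : Type) := List (Round V S)

/-- A (pure) strategy: a bid for each history and current configuration, a
choice of bidding winner upon a tie (used when this player is the mechanism's
chooser), and a choice of successor vertex upon winning a bidding. -/
structure Strat (V : Type) (M : Mech V) where
  bid : Hist V M.S → Conf V M.S → ℕ
  choice : Hist V M.S → Conf V M.S → ℕ → Fin 2
  move : Hist V M.S → Conf V M.S → ℕ → ℕ → V

def budget {V S : Type} (i : Fin 2) (c : Conf V S) : ℕ :=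
  if i = 0 then c.B1 else c.B2

/-- Legality of a strategy for Player `i`: bids never exceed the available
budget, tie choices are members of the mechanism's option set, and moves
follow edges of the graph. -/
def Legal {V : Type} (G : Game V) (i : Fin 2) (σ : Strat V G.M) : Prop :=
  (∀ h c, σ.bid h c ≤ budget i c) ∧
  (∀ h c b, σ.choice h c b ∈ G.M.opts c.s) ∧
  (∀ h c b1 b2, G.E c.v (σ.move h c b1 b2))

/-- The configuration after a bidding at `c` with bids `b1, b2`, tie flag
`tie`, bidding winner `w` and destination `d`: the winner pays his bid to the
loser, the token moves to `d`, and the mechanism state is updated. -/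
def nextConf {V : Type} (G : Game V) (c : Conf V G.M.S) (b1 b2 : ℕ) (tie : Bool)
    (w : Fin 2) (d : V) : Conf V G.M.S :=
  { v := d
    B1 := if w = 0 then c.B1 - b1 else c.B1 + b2
    B2 := if w = 0 then c.B2 + b1 else c.B2 - b2
    s := G.M.update c.s tie w (if w = 0 then b1 else b2) d }

/-- One round of the play of two strategies. -/
def stepPlay {V : Type} (G : Game V) (σ1 σ2 : Strat V G.M)
    (p : Hist V G.M.S × Conf V G.M.S) : Hist V G.M.S × Conf V G.M.S :=
  let h := p.1
  let c := p.2
  let b1 := σ1.bid h c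
  let b2 := σ2.bid h c
  let w : Fin 2 :=
    if b2 < b1 then 0
    else if b1 < b2 then 1
    else if G.M.chooser c.s = 0 then σ1.choice h c b1 else σ2.choice h c b1
  let d := if w = 0 then σ1.move h c b1 b2 else σ2.move h c b1 b2
  (h ++ [(c, b1, b2)], nextConf G c b1 b2 (decide (b1 = b2)) w d)

def playAux {V : Type} (G : Game V) (σ1 σ2 : Strat V G.M) (c0 : Conf V G.M.S) :
    ℕ → Hist V G.M.S × Conf V G.M.S
  | 0 => ([], c0)
  | n + 1 => stepPlay G σ1 σ2 (playAux G σ1 σ2 c0 n)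

/-- The vertex path of the play of `σ1` against `σ2` from `c0`. -/
def path {V : Type} (G : Game V) (σ1 σ2 : Strat V G.M) (c0 : Conf V G.M.S) (n : ℕ) : V :=
  (playAux G σ1 σ2 c0 n).2.v

/-- `σ` is a winning strategy for Player `i` at the configuration `c`. -/
def WinStrat {V : Type} (G : Game V) (i : Fin 2) (σ : Strat V G.M)
    (c : Conf V G.M.S) : Prop :=
  Legal G i σ ∧ ∀ τ : Strat V G.M, Legal G (1 - i) τ →
    (if i = 0 then G.obj (path G σ τ c) else ¬ G.obj (path G τ σ c))

/-- Player `i` has a winning strategy from configuration `c`. -/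
def HasWin {V : Type} (G : Game V) (i : Fin 2) (c : Conf V G.M.S) : Prop :=
  ∃ σ, WinStrat G i σ c

/-! ## The turn-based game `G_1` in which Player 1 reveals his bid first. -/

/-- A Player 2 strategy in `G_1`: its bid may additionally depend on the bid
just revealed by Player 1. -/
structure RespStrat (V : Type) (M : Mech V) where
  bid : Hist V M.S → Conf V M.S → ℕ → ℕ
  choice : Hist V M.S → Conf V M.S → ℕ → Fin 2
  move : Hist V M.S → Conf V M.S → ℕ → ℕ → V

def RespLegal {V : Type} (G : Game V) (τ : RespStrat V G.M) : Prop :=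
  (∀ h c b1, τ.bid h c b1 ≤ c.B2) ∧
  (∀ h c b, τ.choice h c b ∈ G.M.opts c.s) ∧
  (∀ h c b1 b2, G.E c.v (τ.move h c b1 b2))

def stepPlayFirst {V : Type} (G : Game V) (σ : Strat V G.M) (τ : RespStrat V G.M)
    (p : Hist V G.M.S × Conf V G.M.S) : Hist V G.M.S × Conf V G.M.S :=
  let h := p.1
  let c := p.2
  let b1 := σ.bid h c
  let b2 := τ.bid h c b1
  let w : Fin 2 :=
    if b2 < b1 then 0
    else if b1 < b2 then 1
    else if G.M.chooser c.s = 0 then σ.choice h c b1 else τ.choice h c b1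
  let d := if w = 0 then σ.move h c b1 b2 else τ.move h c b1 b2
  (h ++ [(c, b1, b2)], nextConf G c b1 b2 (decide (b1 = b2)) w d)

def playFirstAux {V : Type} (G : Game V) (σ : Strat V G.M) (τ : RespStrat V G.M)
    (c0 : Conf V G.M.S) : ℕ → Hist V G.M.S × Conf V G.M.S
  | 0 => ([], c0)
  | n + 1 => stepPlayFirst G σ τ (playFirstAux G σ τ c0 n)

def pathFirst {V : Type} (G : Game V) (σ : Strat V G.M) (τ : RespStrat V G.M)
    (c0 : Conf V G.M.S) (n : ℕ) : V :=
  (playFirstAux G σ τ c0 n).2.v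

/-- Player 1 has a winning strategy from configuration `c` in the turn-based
game `G_1` in which he reveals his bid before Player 2. -/
def P1WinsFirst {V : Type} (G : Game V) (c : Conf V G.M.S) : Prop :=
  ∃ σ : Strat V G.M, Legal G 0 σ ∧
    ∀ τ : RespStrat V G.M, RespLegal G τ → G.obj (pathFirst G σ τ c)

/-! ## The bidding matrix -/

/-- The position of `G_1` reached from `c` after bids `b1, b2` with bidding
winner `w` is winning for Player 1: if Player 1 won the bidding he can choose a
successor leading to a configuration from which he wins `G_1`, and if Player 2
won the bidding then every successor he may choose leads to such a
configuration. -/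
def AfterWin {V : Type} (G : Game V) (c : Conf V G.M.S) (b1 b2 : ℕ) (tie : Bool)
    (w : Fin 2) : Prop :=
  if w = 0 then ∃ d, G.E c.v d ∧ P1WinsFirst G (nextConf G c b1 b2 tie w d)
  else ∀ d, G.E c.v d → P1WinsFirst G (nextConf G c b1 b2 tie w d)

/-- The position of `G_1` reached from `c` after the bids `b1, b2` — just
before the bidding winner chooses a successor vertex and, on a tie, before the
mechanism's chooser decides who wins the bidding — is winning for Player 1. -/
def PosWin1 {V : Type} (G : Game V) (c : Conf V G.M.S) (b1 b2 : ℕ) : Prop :=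
  if b1 = b2 then
    if G.M.chooser c.s = 0 then ∃ w ∈ G.M.opts c.s, AfterWin G c b1 b2 true w
    else ∀ w ∈ G.M.opts c.s, AfterWin G c b1 b2 true w
  else AfterWin G c b1 b2 false (if b2 < b1 then 0 else 1)

open Classical in
/-- The bidding matrix of the configuration `c`: `Mc G c b1 b2 = 1` if the
position of `G_1` reached from `c` after the bids `b1, b2` is winning for
Player 1 in `G_1`, and `= 2` otherwise. -/
noncomputable def Mc {V : Type} (G : Game V) (c : Conf V G.M.S) (b1 b2 : ℕ) : ℕ :=
  if PosWin1 G c b1 b2 then 1 else 2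

/-! ## Particular tie-breaking mechanisms -/

/-- A general tie-breaking transducer: its state is updated from the letter
describing the outcome of a bidding (vertex moved to, winner, whether a tie
occurred, winning bid), and on a tie in state `q` Player `Γ q` wins. -/
structure TieTransducer (V : Type) where
  Q : Type
  q0 : Q
  δ : Q → V → Fin 2 → Bool → ℕ → Q
  Γ : Q → Fin 2

/-- The mechanism of a tie-breaking transducer. -/
def TieTransducer.mech {V : Type} (T : TieTransducer V) : Mech V where
  S := T.Q
  opts := fun q => {T.Γ q}
  opts_nonempty := fun q => ⟨T.Γ q, rfl⟩
  chooser := fun q => T.Γ q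
  update := fun q tie w b d => T.δ q d w tie b

/-- A tie-breaking transducer that is un-aware of ties: its input letters
record only the vertex moved to, the winner, and the winning bid. -/
structure TieTransducerUA (V : Type) where
  Q : Type
  q0 : Q
  δ : Q → V → Fin 2 → ℕ → Q
  Γ : Q → Fin 2

/-- The mechanism of a tie-breaking transducer that is un-aware of ties. -/
def TieTransducerUA.mech {V : Type} (T : TieTransducerUA V) : Mech V where
  S := T.Q
  opts := fun q => {T.Γ q}
  opts_nonempty := fun q => ⟨T.Γ q, rfl⟩
  chooser := fun q => T.Γ q
  update := fun q _tie w b d => T.δ q d w b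

/-- Advantage-based tie-breaking: the state records the advantage holder; on a
tie the holder chooses the winner; if he chooses himself the advantage passes
to the opponent, otherwise he keeps it; non-tied biddings leave the state
unchanged. -/
def advMech (V : Type) : Mech V where
  S := Fin 2
  opts := fun _ => Set.univ
  opts_nonempty := fun _ => ⟨0, Set.mem_univ 0⟩
  chooser := fun s => s
  update := fun s tie w _ _ => if tie then (if w = s then 1 - s else s) else s

/-- Alternating tie-breaking: the state records the advantage holder; on a tie
the holder wins the bidding and the advantage passes to the other player;
non-tied biddings leave the state unchanged. -/
def altMech (V : Type) : Mech V where
  S := Fin 2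
  opts := fun s => {s}
  opts_nonempty := fun s => ⟨s, rfl⟩
  chooser := fun s => s
  update := fun s tie _ _ _ => if tie then 1 - s else s

end Bid


namespace Bid

/-! ### The abstract game -/

section Abstract

variable {Q V : Type}

/-- The positions from which the player with effectivity function `Eff` can force the next
position to lie in `X`. -/
def Pre (Eff : Q → Set Q → Prop) (X : Set Q) : Set Q := {q | ∃ A, Eff q A ∧ A ⊆ X}

/-- The positions `p 0, …, p n`, most recent first. -/
def track (p : ℕ → Q) : ℕ → List Q
  | 0 => [p 0]
  | n + 1 => p (n + 1) :: track p n

/-- The set of vertices visited infinitely often. -/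
def infV (v : Q → V) (p : ℕ → Q) : Set V := {u | ∀ m : ℕ, ∃ n ≥ m, v (p n) = u}

/-- The objective of the game stopped outside `U`: a play that stays in `U` must satisfy the Müller
condition `F`, and a play that leaves `U` must do so into `X`. -/
def Obj (v : Q → V) (U : Set V) (X : Set Q) (F : Set (Set V)) (p : ℕ → Q) : Prop :=
  ((∀ n, v (p n) ∈ U) → infV v p ∈ F) ∧
    ∀ n, v (p n) ∉ U → (∀ k < n, v (p k) ∈ U) → p n ∈ X

/-- The play `p` follows `σ` as long as it has not left `U`.  Strategies read the list of positions
visited so far (most recent first) and return the set of admitted next positions. -/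
def Cons (v : Q → V) (U : Set V) (σ : List Q → Set Q) (p : ℕ → Q) : Prop :=
  ∀ n, (∀ k ≤ n, v (p k) ∈ U) → p (n + 1) ∈ σ (track p n)

/-- A single strategy wins the game stopped outside `U` from every position of `A`. -/
def Wins (Eff : Q → Set Q → Prop) (v : Q → V) (U : Set V) (X : Set Q) (F : Set (Set V))
    (A : Set Q) : Prop :=
  ∃ σ : List Q → Set Q, (∀ q h, Eff q (σ (q :: h))) ∧
    ∀ p : ℕ → Q, p 0 ∈ A → Cons v U σ p → Obj v U X F p

lemma track_cons (p : ℕ → Q) (n : ℕ) : ∃ l, track p n = p n :: l := by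
  cases n
  · exact ⟨[], rfl⟩
  · exact ⟨_, rfl⟩

lemma getLast_track (p : ℕ → Q) (n : ℕ) : (track p n).getLast? = some (p 0) := by
  induction n with
  | zero => rfl
  | succ n ih =>
    obtain ⟨l, hl⟩ := track_cons p n
    rw [track, hl, List.getLast?_cons_cons, ← hl, ih]

/-- Winning strategies from single positions combine into one: the starting position is the oldest
entry of the history. -/
lemma wins_uniform {Eff : Q → Set Q → Prop} (hne : ∀ q, ∃ A, Eff q A) {v : Q → V} {U : Set V}
    {X : Set Q} {F : Set (Set V)} {A : Set Q} (h : ∀ q ∈ A, Wins Eff v U X F {q}) :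
    Wins Eff v U X F A := by
  classical
  choose dflt hd using hne
  have h' : ∀ q, ∃ σ : List Q → Set Q, (∀ q h, Eff q (σ (q :: h))) ∧
      (q ∈ A → ∀ p : ℕ → Q, p 0 = q → Cons v U σ p → Obj v U X F p) := by
    intro q
    by_cases hq : q ∈ A
    · obtain ⟨σ, h1, h2⟩ := h q hq
      exact ⟨σ, h1, fun _ p hp => h2 p hp⟩
    · refine ⟨fun l => match l with | [] => ∅ | q :: _ => dflt q, fun q _ => hd q, fun h => ?_⟩
      exact absurd h hq
  choose σ h1 h2 using h'
  refine ⟨fun l => match l.getLast? with | none => ∅ | some q => σ q l, ?_, ?_⟩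
  · intro q l
    obtain ⟨x, hx⟩ : ∃ x, (q :: l).getLast? = some x :=
      Option.isSome_iff_exists.1 (by simp)
    simp only [hx]
    exact h1 x q l
  · intro p hp hc
    refine h2 (p 0) hp p rfl ?_
    intro n hn
    have := hc n hn
    simpa only [getLast_track] using this

lemma infV_shift (v : Q → V) (p : ℕ → Q) (a : ℕ) : infV v (fun k => p (a + k)) = infV v p := by
  ext u
  constructor
  · intro h m
    obtain ⟨n, hn, hv⟩ := h m
    exact ⟨a + n, by omega, hv⟩
  · intro h m
    obtain ⟨n, hn, hv⟩ := h (a + m)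
    exact ⟨n - a, by omega, by simpa [Nat.add_sub_cancel' (show a ≤ n by omega)] using hv⟩

lemma obj_shift {v : Q → V} {U : Set V} {X : Set Q} {F : Set (Set V)} {p : ℕ → Q} {a : ℕ}
    (ha : ∀ k < a, v (p k) ∈ U) (h : Obj v U X F (fun k => p (a + k))) : Obj v U X F p := by
  refine ⟨fun hU => ?_, fun n hn hk => ?_⟩
  · rw [← infV_shift v p a]
    exact h.1 fun n => hU _
  · have han : a ≤ n := by
      by_contra hlt
      exact hn (ha n (by omega))
    have := h.2 (n - a) (by simpa [Nat.add_sub_cancel' han] using hn)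
      (fun k hk' => hk _ (by omega))
    simpa [Nat.add_sub_cancel' han] using this

/-! ### Playing strategies in stages -/

section Stages

open Classical in
/-- The memory of the staged strategy begun in stage `j`: the index of the current stage and the
positions seen since it began.  Stage `i` ends after a position satisfying `sw i`. -/
noncomputable def stMem (sw : ℕ → Q → Prop) (j : ℕ) : List Q → ℕ × List Q
  | [] => (j, [])
  | q' :: h => match stMem sw j h with
    | (i, []) => (i, [q'])
    | (i, q :: l) => if sw i q then (i + 1, [q']) else (i, q' :: q :: l)

open Classical in
/-- The staged strategy: stage `i` follows `S i`, except at positions satisfying `sw i`, where `T i`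
is played and the stage ends. -/
noncomputable def stStrat (sw : ℕ → Q → Prop) (T : ℕ → Q → Set Q) (S : ℕ → List Q → Set Q)
    (j : ℕ) (h : List Q) : Set Q :=
  match stMem sw j h with
  | (_, []) => ∅
  | (i, q :: l) => if sw i q then T i q else S i (q :: l)

variable {sw : ℕ → Q → Prop} {T : ℕ → Q → Set Q} {S : ℕ → List Q → Set Q}

lemma stMem_cons (j : ℕ) (q : Q) (h : List Q) :
    ∃ i l, stMem sw j (q :: h) = (i, q :: l) := by
  rw [stMem]
  split
  · exact ⟨_, _, rfl⟩
  · split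
    · exact ⟨_, _, rfl⟩
    · exact ⟨_, _, rfl⟩

lemma stStrat_eff {Eff : Q → Set Q → Prop} (hT : ∀ i q, sw i q → Eff q (T i q))
    (hS : ∀ i q h, Eff q (S i (q :: h))) (j : ℕ) (q : Q) (h : List Q) :
    Eff q (stStrat sw T S j (q :: h)) := by
  obtain ⟨i, l, hl⟩ := stMem_cons (sw := sw) j q h
  rw [stStrat, hl]
  dsimp only
  split
  · exact hT _ _ ‹_›
  · exact hS _ _ _

lemma stMem_first (j : ℕ) (p : ℕ → Q) (n : ℕ) (hn : ∀ k < n, ¬ sw j (p k)) :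
    stMem sw j (track p n) = (j, track p n) := by
  induction n with
  | zero => rfl
  | succ n ih =>
    have := ih fun k hk => hn k (by omega)
    obtain ⟨l, hl⟩ := track_cons p n
    rw [track, stMem, this, hl]
    simp [hn n (by omega)]

lemma stMem_next (j : ℕ) (p : ℕ → Q) (n : ℕ) (hn : ∀ k < n, ¬ sw j (p k)) (hs : sw j (p n))
    (k : ℕ) :
    stMem sw j (track p (n + 1 + k)) = stMem sw (j + 1) (track (fun k => p (n + 1 + k)) k) := by
  induction k with
  | zero =>
    have := stMem_first j p n hn
    obtain ⟨l, hl⟩ := track_cons p n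
    rw [Nat.add_zero, track.eq_2, stMem.eq_2, this, hl]
    simp [hs, track, stMem]
  | succ k ih =>
    rw [← Nat.add_assoc, track, stMem, ih, track, stMem]
    rfl

lemma stStrat_first {j : ℕ} {p : ℕ → Q} {n : ℕ} (hn : ∀ k < n, ¬ sw j (p k)) :
    (sw j (p n) → stStrat sw T S j (track p n) = T j (p n)) ∧
    (¬ sw j (p n) → stStrat sw T S j (track p n) = S j (track p n)) := by
  obtain ⟨l, hl⟩ := track_cons p n
  have := stMem_first j p n hn
  rw [stStrat, this, hl]
  constructor
  · intro h; simp [h]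
  · intro h; simp [h]

/-- As long as the play is in a set `U'` free of switching positions, a staged play is a play of
the strategy of its first stage. -/
lemma cons_stage {v : Q → V} {U U' : Set V} {j : ℕ} {p : ℕ → Q} (hU : U' ⊆ U)
    (hsw : ∀ q, sw j q → v q ∉ U') (h : Cons v U (stStrat sw T S j) p) : Cons v U' (S j) p := by
  intro n hn
  have := h n fun k hk => hU (hn k hk)
  rwa [(stStrat_first fun k hk hs => hsw _ hs (hn k hk.le)).2
    fun hs => hsw _ hs (hn n le_rfl)] at this

lemma cons_shift {v : Q → V} {U : Set V} {j : ℕ} {p : ℕ → Q} {n : ℕ}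
    (hn : ∀ k < n, ¬ sw j (p k)) (hs : sw j (p n)) (hU : ∀ k ≤ n, v (p k) ∈ U)
    (h : Cons v U (stStrat sw T S j) p) :
    p (n + 1) ∈ T j (p n) ∧ Cons v U (stStrat sw T S (j + 1)) (fun k => p (n + 1 + k)) := by
  constructor
  · have := h n hU
    rwa [(stStrat_first hn).1 hs] at this
  · intro k hk
    have := h (n + 1 + k) fun i hi => by
      by_cases hin : i ≤ n
      · exact hU i hin
      · have := hk (i - (n + 1)) (by omega)
        simpa [Nat.add_sub_cancel' (show n + 1 ≤ i by omega)] using this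
    rw [stStrat, stMem_next j p n hn hs] at this
    exact this

/-- The decision set of the game on `U \ {u}`: leaving `U` must lead into `X`, and reaching `u` must
happen where the next position can be forced into `Y`. -/
def stageExit (Eff : Q → Set Q → Prop) (v : Q → V) (U : Set V) (X Y : Set Q) (u : V) : Set Q :=
  {q | (v q ∉ U ∧ q ∈ X) ∨ (v q = u ∧ v q ∈ U ∧ q ∈ Pre Eff Y)}

/-- One stage: either the whole play already satisfies the objective, or the stage ends with a
visit to `u` followed by a position in `Y`. -/
lemma stage {Eff : Q → Set Q → Prop} {v : Q → V} {U : Set V} {X Y A : Set Q} {F : Set (Set V)}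
    {u : V} {j : ℕ} {p : ℕ → Q}
    (hS : ∀ p : ℕ → Q, p 0 ∈ A → Cons v (U \ {u}) (S j) p →
      Obj v (U \ {u}) (stageExit Eff v U X Y u) F p)
    (hsw : ∀ q, sw j q ↔ v q = u ∧ q ∈ Pre Eff Y) (hT : ∀ q, sw j q → T j q ⊆ Y)
    (hp : p 0 ∈ A) (h : Cons v U (stStrat sw T S j) p) :
    Obj v U X F p ∨ ∃ n, v (p n) = u ∧ (∀ k ≤ n, v (p k) ∈ U) ∧ p (n + 1) ∈ Y ∧
      Cons v U (stStrat sw T S (j + 1)) (fun k => p (n + 1 + k)) := by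
  classical
  have hO := hS p hp (cons_stage Set.sdiff_subset
    (fun q hq hq' => hq'.2 ((hsw q).1 hq).1) h)
  by_cases hex : ∃ n, v (p n) ∉ U \ {u}
  · let n := Nat.find hex
    have hn : v (p n) ∉ U \ {u} := Nat.find_spec hex
    have hlt : ∀ k < n, v (p k) ∈ U \ {u} := fun k hk => not_not.1 (Nat.find_min hex hk)
    rcases hO.2 n hn hlt with ⟨hU, hX⟩ | ⟨hu, hU, hY⟩
    · left
      refine ⟨fun hall => absurd (hall n) hU, fun m hm hk => ?_⟩
      have : m = n := by
        rcases lt_trichotomy m n with hl | hl | hl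
        · exact absurd (hlt m hl).1 hm
        · exact hl
        · exact absurd (hk n hl) hU
      rwa [this]
    · right
      have hle : ∀ k ≤ n, v (p k) ∈ U := fun k hk => by
        rcases hk.lt_or_eq with hl | hl
        · exact (hlt k hl).1
        · rwa [hl]
      have hs : sw j (p n) := (hsw _).2 ⟨hu, hY⟩
      obtain ⟨h1, h2⟩ := cons_shift (fun k hk hs' => (hlt k hk).2 ((hsw _).1 hs').1) hs hle h
      exact ⟨n, hu, hle, hT _ hs h1, h2⟩
  · push Not at hex
    exact .inl ⟨fun _ => hO.1 hex, fun m hm _ => absurd (hex m).1 hm⟩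

end Stages

/-! ### Müller determinacy from local determinacy -/

/-- `X` is upward closed for `r`. -/
def Up (r : Q → Q → Prop) (X : Set Q) : Prop := ∀ q q', r q q' → q ∈ X → q' ∈ X

/-- Local determinacy on upward closed sets, for the effectivity functions of the two players. -/
structure Arena (v : Q → V) (E1 E2 : Q → Set Q → Prop) (r : Q → Q → Prop) : Prop where
  ne1 : ∀ q, ∃ A, E1 q A
  ne2 : ∀ q, ∃ A, E2 q A
  pre_up : ∀ X, Up r X → Up r (Pre E1 X)
  pre_dual : ∀ X, Up r X → Pre E2 Xᶜ = (Pre E1 X)ᶜ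
  r_v : ∀ q q', r q q' → v q = v q'

lemma up_compl {r : Q → Q → Prop} {X : Set Q} (h : Up r X) : Up (fun a b => r b a) Xᶜ :=
  fun q q' hr hq hq' => hq (h q' q hr hq')

/-- Exchanging the players reverses the order. -/
lemma Arena.swap {v : Q → V} {E1 E2 : Q → Set Q → Prop} {r : Q → Q → Prop}
    (a : Arena v E1 E2 r) : Arena v E2 E1 (fun x y => r y x) where
  ne1 := a.ne2
  ne2 := a.ne1
  pre_up X hX := by
    have hX' : Up r Xᶜ := up_compl hX
    have := a.pre_dual _ hX'
    rw [compl_compl] at this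
    rw [this]
    exact up_compl (a.pre_up _ hX')
  pre_dual X hX := by
    have hX' : Up r Xᶜ := up_compl hX
    have := a.pre_dual _ hX'
    rw [compl_compl] at this
    rw [this, compl_compl]
  r_v q q' h := (a.r_v q' q h).symm

open Classical in
/-- An action forcing the next position into `Y`, at the positions where there is one. -/
noncomputable def force (Eff : Q → Set Q → Prop) (Y : Set Q) (q : Q) : Set Q :=
  if h : q ∈ Pre Eff Y then h.choose else ∅

lemma force_spec {Eff : Q → Set Q → Prop} {Y : Set Q} {q : Q} (h : q ∈ Pre Eff Y) :
    Eff q (force Eff Y q) ∧ force Eff Y q ⊆ Y := by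
  rw [force, dif_pos h]
  exact h.choose_spec

/-- Winning a single stage whose target is a set on which the player wins anyway. -/
lemma wins_of_stage {Eff : Q → Set Q → Prop} {v : Q → V} {U : Set V} {X Y A : Set Q}
    {F : Set (Set V)} {u : V}
    (h0 : Wins Eff v (U \ {u}) (stageExit Eff v U X Y u) F A) (h1 : Wins Eff v U X F Y) :
    Wins Eff v U X F A := by
  obtain ⟨σ0, he0, hw0⟩ := h0
  obtain ⟨σ1, he1, hw1⟩ := h1
  let sw : ℕ → Q → Prop := fun i q => i = 0 ∧ v q = u ∧ q ∈ Pre Eff Y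
  let T : ℕ → Q → Set Q := fun _ => force Eff Y
  let S : ℕ → List Q → Set Q := fun i => if i = 0 then σ0 else σ1
  refine ⟨stStrat sw T S 0, ?_, ?_⟩
  · refine stStrat_eff (fun i q hq => (force_spec hq.2.2).1) (fun i q h => ?_) 0
    by_cases hi : i = 0
    · simpa [S, hi] using he0 q h
    · simpa [S, hi] using he1 q h
  · intro p hp hc
    rcases stage (Eff := Eff) (X := X) (Y := Y) (F := F) (u := u) (by simpa [S] using hw0)
      (by simp [sw]) (fun q hq => (force_spec hq.2.2).2) hp hc with h | ⟨n, -, hU, hY, hc'⟩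
    · exact h
    · refine obj_shift (a := n + 1) (fun k hk => hU k (by omega)) (hw1 _ hY ?_)
      have := cons_stage (U' := U) le_rfl (fun q hq => by simp [sw] at hq) hc'
      simpa [S] using this

/-- If `U` satisfies the Müller condition and every stage can be won from `K` with target `K`, then
cycling through the stages wins from `K`. -/
lemma wins_of_cycle [Finite V] {Eff : Q → Set Q → Prop} {v : Q → V} {U : Set V} {X K : Set Q}
    {F : Set (Set V)} (hne : U.Nonempty) (hF : U ∈ F)
    (h : ∀ u ∈ U, Wins Eff v (U \ {u}) (stageExit Eff v U X K u) F K) :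
    Wins Eff v U X F K := by
  have : Nonempty U := hne.to_subtype
  obtain ⟨g, hg⟩ := exists_surjective_nat U
  -- every vertex of `U` is the goal of infinitely many stages
  let e : ℕ → U := fun j => g (Nat.unpair j).1
  have he : ∀ u ∈ U, ∀ m, ∃ j ≥ m, (e j : V) = u := by
    intro u hu m
    obtain ⟨a, ha⟩ := hg ⟨u, hu⟩
    exact ⟨Nat.pair a m, Nat.right_le_pair a m, by simp [e, ha]⟩
  choose S hS1 hS2 using fun j : ℕ => h (e j) (e j).2
  let sw : ℕ → Q → Prop := fun j q => v q = e j ∧ q ∈ Pre Eff K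
  let T : ℕ → Q → Set Q := fun _ => force Eff K
  have key : ∀ j (p : ℕ → Q), p 0 ∈ K → Cons v U (stStrat sw T S j) p → Obj v U X F p ∨
      ∃ n, v (p n) = e j ∧ (∀ k ≤ n, v (p k) ∈ U) ∧ p (n + 1) ∈ K ∧
      Cons v U (stStrat sw T S (j + 1)) (fun k => p (n + 1 + k)) := fun j p hp hc =>
    stage (hS2 j) (fun q => Iff.rfl) (fun q hq => (force_spec hq.2).2) hp hc
  refine ⟨stStrat sw T S 0,
    stStrat_eff (fun i q hq => (force_spec hq.2).1) (fun i q h => hS1 i q h) 0, ?_⟩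
  intro p hp hc
  by_contra hO
  -- otherwise no stage lasts forever: stage `j` begins at some time `a ≥ j`
  have starts : ∀ j, ∃ a ≥ j, (∀ k < a, v (p k) ∈ U) ∧ p a ∈ K ∧
      Cons v U (stStrat sw T S j) (fun k => p (a + k)) := by
    intro j
    induction j with
    | zero => exact ⟨0, le_rfl, by simp, hp, by simpa using hc⟩
    | succ j ih =>
      obtain ⟨a, haj, haU, haK, hac⟩ := ih
      rcases key j _ (by simpa using haK) hac with h | ⟨n, -, hU, hK, hc'⟩
      · exact absurd (obj_shift haU h) hO
      · refine ⟨a + (n + 1), by omega, fun k hk => ?_, hK, ?_⟩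
        · by_cases hka : k < a
          · exact haU k hka
          · have := hU (k - a) (by omega)
            simpa [Nat.add_sub_cancel' (show a ≤ k by omega)] using this
        · simpa [Nat.add_assoc] using hc'
  have hall : ∀ n, v (p n) ∈ U := fun n => by
    obtain ⟨a, ha, haU, -⟩ := starts (n + 1)
    exact haU n (by omega)
  refine hO ⟨fun _ => ?_, fun n hn _ => absurd (hall n) hn⟩
  convert hF using 1
  ext u
  constructor
  · intro hu
    obtain ⟨n, -, rfl⟩ := hu 0
    exact hall n
  · intro hu m
    obtain ⟨j, hj, rfl⟩ := he u hu m
    obtain ⟨a, haj, haU, haK, hac⟩ := starts j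
    rcases key j _ (by simpa using haK) hac with h | ⟨n, hn, -⟩
    · exact absurd (obj_shift haU h) hO
    · exact ⟨a + n, by omega, hn⟩

/-- Determinacy of the game stopped outside `U`, with an upward closed winning region. -/
def Det (E1 E2 : Q → Set Q → Prop) (v : Q → V) (r : Q → Q → Prop) (F : Set (Set V))
    (U : Set V) : Prop :=
  ∀ X, Up r X → ∃ K, Up r K ∧ Wins E1 v U X F K ∧ Wins E2 v U Xᶜ Fᶜ Kᶜ

lemma Det.swap {E1 E2 : Q → Set Q → Prop} {v : Q → V} {r : Q → Q → Prop} {F : Set (Set V)}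
    {U : Set V} (h : Det E1 E2 v r F U) : Det E2 E1 v (fun x y => r y x) Fᶜ U := by
  intro X hX
  obtain ⟨K, hK, h1, h2⟩ := h Xᶜ (up_compl hX)
  rw [compl_compl] at h2
  exact ⟨Kᶜ, up_compl hK, h2, by simpa using h1⟩

lemma Arena.step [Finite V] {v : Q → V} {E1 E2 : Q → Set Q → Prop} {r : Q → Q → Prop}
    (a : Arena v E1 E2 r) {F : Set (Set V)} {U : Set V} (hne : U.Nonempty) (hF : U ∈ F)
    (ih : ∀ u ∈ U, Det E1 E2 v r F (U \ {u})) : Det E1 E2 v r F U := by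
  intro X hX
  -- `K` is the complement of the largest downward closed set won by the opponent
  let K : Set Q := {q | ∀ D, Up r Dᶜ → Wins E2 v U Xᶜ Fᶜ D → q ∉ D}
  have hK : Up r K := by
    intro q q' hr hq D hD hW hq'
    exact hD q q' hr (hq D hD hW) hq'
  have hK2 : Wins E2 v U Xᶜ Fᶜ Kᶜ := by
    refine wins_uniform a.ne2 fun q hq => ?_
    simp only [K, Set.mem_compl_iff, Set.mem_ofPred_eq, not_forall, not_not] at hq
    obtain ⟨D, -, ⟨σ, h1, h2⟩, hqD⟩ := hq
    exact ⟨σ, h1, fun p hp => h2 p (by rw [hp]; exact hqD)⟩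
  refine ⟨K, hK, wins_of_cycle hne hF fun u hu => ?_, hK2⟩
  have hX' : Up r (stageExit E1 v U X K u) := by
    intro q q' hr hq
    have hv := a.r_v q q' hr
    rcases hq with ⟨h1, h2⟩ | ⟨h1, h2, h3⟩
    · exact .inl ⟨hv ▸ h1, hX q q' hr h2⟩
    · exact .inr ⟨hv ▸ h1, hv ▸ h2, a.pre_up K hK q q' hr h3⟩
  obtain ⟨R, hR, hR1, hR2⟩ := ih u hu _ hX'
  have hsub : K ⊆ R := by
    intro q hq
    by_contra hqR
    refine hq Rᶜ (by rwa [compl_compl]) (wins_of_stage (u := u) (Y := Kᶜ) ?_ hK2) hqR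
    obtain ⟨σ, h1, h2⟩ := hR2
    refine ⟨σ, h1, fun p hp hc => ⟨(h2 p hp hc).1, fun n hn hk => ?_⟩⟩
    have h3 := (h2 p hp hc).2 n hn hk
    rw [Set.mem_compl_iff, stageExit, Set.mem_ofPred_eq, not_or] at h3
    rw [stageExit, Set.mem_ofPred_eq, a.pre_dual K hK]
    by_cases hU : v (p n) ∈ U
    · have hvu : v (p n) = u := by
        by_contra hvu
        exact hn ⟨hU, hvu⟩
      exact .inr ⟨hvu, hU, fun hP => h3.2 ⟨hvu, hU, hP⟩⟩
    · exact .inl ⟨hU, fun hx => h3.1 ⟨hU, hx⟩⟩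
  obtain ⟨σ, h1, h2⟩ := hR1
  exact ⟨σ, h1, fun p hp => h2 p (hsub hp)⟩

theorem Arena.det [Finite V] {v : Q → V} {E1 E2 : Q → Set Q → Prop} {r : Q → Q → Prop}
    (a : Arena v E1 E2 r) (F : Set (Set V)) (U : Set V) : Det E1 E2 v r F U := by
  induction U using WellFoundedLT.induction with
  | ind U ih =>
    have ih' : ∀ u ∈ U, Det E1 E2 v r F (U \ {u}) := fun u hu =>
      ih _ (Set.sdiff_singleton_ssubset.2 hu)
    rcases U.eq_empty_or_nonempty with rfl | hne
    · have triv : ∀ (Eff : Q → Set Q → Prop) (X : Set Q) (F : Set (Set V)), (∀ q, ∃ A, Eff q A) →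
          Wins Eff v ∅ X F X := by
        intro Eff X F hE
        choose d hd using hE
        refine ⟨fun l => match l with | [] => ∅ | q :: _ => d q, fun q _ => hd q, ?_⟩
        intro p hp _
        refine ⟨fun h => absurd (h 0) (by simp), fun n _ hk => ?_⟩
        cases n with
        | zero => exact hp
        | succ n => exact absurd (hk 0 (by omega)) (by simp)
      exact fun X hX => ⟨X, hX, triv _ _ _ a.ne1, triv _ _ _ a.ne2⟩
    · by_cases hF : U ∈ F
      · exact a.step hne hF ih'
      · have := (a.swap.step (F := Fᶜ) hne hF fun u hu => (ih' u hu).swap).swap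
        rwa [compl_compl] at this

end Abstract

/-! ### One round of advantage-based bidding -/

/-- Whether Player 1 is satisfied with the bids `b1`, `b2` at level `t`, where `adv` says that he
holds the advantage, `P x` that he is satisfied with moving the token at level `x`, and `L x` that
he is satisfied with the opponent moving it at level `x`. -/
def Cell (P L : ℤ → Prop) (adv : Prop) (t : ℤ) (b1 b2 : ℕ) : Prop :=
  (b2 < b1 → P (t - 2 * b1)) ∧ (b1 < b2 → L (t + 2 * b2)) ∧
  (b1 = b2 → (adv → P (t - 2 * b1 - 1) ∨ L (t + 2 * b1)) ∧
    (¬ adv → P (t - 2 * b1) ∧ L (t + 2 * b1 + 1)))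

/-- A matrix of cells has a row of wins or a column of losses; here Player 1 holds the
advantage. -/
lemma cell_det_adv {P L : ℤ → Prop} (hP : ∀ x y, x ≤ y → P x → P y)
    (hL : ∀ x y, x ≤ y → L x → L y) (hLP : ∀ x, L x → P x) (t : ℤ) (B1 B2 : ℕ) :
    (∃ b1 ≤ B1, ∀ b2 ≤ B2, Cell P L True t b1 b2) ∨
    (∃ b2 ≤ B2, ∀ b1 ≤ B1, ¬ Cell P L True t b1 b2) := by
  classical
  simp only [Cell, true_implies, not_true, false_implies, and_true]
  by_cases h0 : P t
  swap
  · right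
    refine ⟨0, by omega, fun b1 _ hc => ?_⟩
    rcases Nat.eq_zero_or_pos b1 with rfl | hpos
    · rcases hc.2.2 rfl with h | h
      · exact h0 (hP _ _ (by simp) h)
      · exact h0 (hLP _ (by simpa using h))
    · exact h0 (hP _ _ (by omega) (hc.1 hpos))
  -- `b` is the largest affordable bid that Player 1 is satisfied to win with
  let b := Nat.findGreatest (fun b => P (t - 2 * b)) B1
  have hbB : b ≤ B1 := Nat.findGreatest_le _
  have hb : P (t - 2 * b) :=
    Nat.findGreatest_spec (P := fun b : ℕ => P (t - 2 * b)) (Nat.zero_le B1) (by simpa using h0)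
  have hmax : ∀ k, b < k → k ≤ B1 → ¬ P (t - 2 * k) := fun k hk hkB =>
    Nat.findGreatest_is_greatest (P := fun b : ℕ => P (t - 2 * b)) hk hkB
  clear_value b
  by_cases hbB2 : B2 < b
  · left
    exact ⟨b, hbB, fun b2 h2 => ⟨fun _ => hb, fun h => by omega, fun h => by omega⟩⟩
  by_cases h1 : L (t + 2 * b)
  · left
    exact ⟨b, hbB, fun b2 h2 => ⟨fun _ => hb, fun h => hL _ _ (by omega) h1, fun _ => .inr h1⟩⟩
  by_cases h2 : P (t - 2 * b - 1)
  swap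
  · right
    refine ⟨b, by omega, fun b1 hb1 hc => ?_⟩
    rcases lt_trichotomy b1 b with h | h | h
    · exact h1 (hc.2.1 h)
    · subst h
      exact (hc.2.2 rfl).elim h2 h1
    · exact hmax b1 h hb1 (hc.1 h)
  by_cases h3 : b + 1 ≤ B2 ∧ ¬ L (t + 2 * (b + 1 : ℕ))
  · right
    refine ⟨b + 1, h3.1, fun b1 hb1 hc => ?_⟩
    rcases lt_trichotomy b1 (b + 1) with h | h | h
    · exact h3.2 (hc.2.1 h)
    · subst h
      rcases hc.2.2 rfl with h | h
      · exact hmax (b + 1) (by omega) hb1 (hP _ _ (by omega) h)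
      · exact h3.2 h
    · exact hmax b1 (by omega) hb1 (hc.1 h)
  · left
    refine ⟨b, hbB, fun b2 hb2 => ⟨fun _ => hb, fun h => ?_, fun _ => .inl h2⟩⟩
    have : L (t + 2 * (b + 1 : ℕ)) := by
      by_contra hL'
      exact h3 ⟨by omega, hL'⟩
    exact hL _ _ (by omega) this

lemma cell_det {P L : ℤ → Prop} (hP : ∀ x y, x ≤ y → P x → P y)
    (hL : ∀ x y, x ≤ y → L x → L y) (hLP : ∀ x, L x → P x) (adv : Prop) (t : ℤ) (B1 B2 : ℕ) :
    (∃ b1 ≤ B1, ∀ b2 ≤ B2, Cell P L adv t b1 b2) ∨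
    (∃ b2 ≤ B2, ∀ b1 ≤ B1, ¬ Cell P L adv t b1 b2) := by
  by_cases ha : adv
  · simpa only [ha] using cell_det_adv hP hL hLP t B1 B2
  · -- exchanging the players negates the predicates and the levels
    have key : ∀ b1 b2, Cell (fun x => ¬ L (-x)) (fun x => ¬ P (-x)) True (-t) b2 b1 ↔
        ¬ Cell P L adv t b1 b2 := by
      intro b1 b2
      simp only [Cell, ha]
      have e1 : -(-t - 2 * (b2 : ℤ)) = t + 2 * b2 := by ring
      have e2 : -(-t + 2 * (b1 : ℤ)) = t - 2 * b1 := by ring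
      have e3 : -(-t - 2 * (b2 : ℤ) - 1) = t + 2 * b2 + 1 := by ring
      have e4 : -(-t + 2 * (b2 : ℤ)) = t - 2 * b2 := by ring
      rw [e1, e2, e3, e4]
      rcases lt_trichotomy b1 b2 with h | h | h
      · simp [h, h.ne, h.ne', h.le]
      · subst h
        simp; tauto
      · simp [h, h.ne, h.ne', h.le]
    have := cell_det_adv (P := fun x => ¬ L (-x)) (L := fun x => ¬ P (-x))
      (fun x y hxy h h' => h (hL _ _ (by omega) h')) (fun x y hxy h h' => h (hP _ _ (by omega) h'))
      (fun x h h' => h (hLP _ h')) (-t) B2 B1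
    simp only [key, not_not] at this
    exact this.symm

/-- A bid good at one level stays good at every higher level. -/
lemma cell_mono {P L : ℤ → Prop} (hP : ∀ x y, x ≤ y → P x → P y)
    (hL : ∀ x y, x ≤ y → L x → L y) (hLP : ∀ x, L x → P x) {adv adv' : Prop} {t t' : ℤ}
    {B2 B2' b1 : ℕ} (ht : t ≤ t') (hB : B2' ≤ B2) (h1 : adv' → ¬ adv → t + 1 ≤ t')
    (h2 : adv → ¬ adv' → t + 1 ≤ t' ∧ B2' + 1 ≤ B2)
    (h : ∀ b2 ≤ B2, Cell P L adv t b1 b2) : ∀ b2 ≤ B2', Cell P L adv' t' b1 b2 := by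
  intro b2 hb2
  have hc := h b2 (by omega)
  refine ⟨fun hlt => hP _ _ (by omega) (hc.1 hlt), fun hlt => hL _ _ (by omega) (hc.2.1 hlt), ?_⟩
  rintro rfl
  obtain ⟨ha, hna⟩ := hc.2.2 rfl
  refine ⟨fun ha' => ?_, fun hna' => ?_⟩
  · by_cases hadv : adv
    · exact (ha hadv).imp (hP _ _ (by omega)) (hL _ _ (by omega))
    · have := h1 ha' hadv
      exact .inl (hP _ _ (by omega) (hna hadv).1)
  · by_cases hadv : adv
    · have ⟨h3, h4⟩ := (h2 hadv hna')
      -- the opponent could have overbid by one unit before the level was raised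
      have h5 := (h (b1 + 1) (by omega)).2.1 (by omega)
      refine ⟨?_, hL _ _ (by push_cast; omega) h5⟩
      rcases ha hadv with h6 | h6
      · exact hP _ _ (by omega) h6
      · rcases Nat.eq_zero_or_pos b1 with rfl | hpos
        · exact hP _ _ (by simp; omega) (hLP _ h6)
        · exact hP _ _ (by omega) ((h 0 (by omega)).1 hpos)
    · obtain ⟨h3, h4⟩ := hna hadv
      exact ⟨hP _ _ (by omega) h3, hL _ _ (by omega) h4⟩

/-! ### The bidding game as an arena -/

section Game

variable {V : Type}

/-- The configuration after one round: `w1`, `w2` are the tie choices and `d1`, `d2` the moves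
prepared by the players. -/
def outc (G : Game V) (c : Conf V G.M.S) (b1 b2 : ℕ) (w1 w2 : Fin 2) (d1 d2 : V) :
    Conf V G.M.S :=
  let w : Fin 2 :=
    if b2 < b1 then 0
    else if b1 < b2 then 1
    else if G.M.chooser c.s = 0 then w1 else w2
  nextConf G c b1 b2 (decide (b1 = b2)) w (if w = 0 then d1 else d2)

/-- Player 1 can force the next configuration into `A` by a bid, a tie choice, and a move that may
depend on the bid of the opponent. -/
def Eff1 (G : Game V) (c : Conf V G.M.S) (A : Set (Conf V G.M.S)) : Prop :=
  ∃ b1 ≤ c.B1, ∃ w1 ∈ G.M.opts c.s, ∃ d1 : ℕ → V, (∀ b, G.E c.v (d1 b)) ∧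
    ∀ b2 ≤ c.B2, ∀ w2 ∈ G.M.opts c.s, ∀ d2, G.E c.v d2 → outc G c b1 b2 w1 w2 (d1 b2) d2 ∈ A

/-- The same for Player 2. -/
def Eff2 (G : Game V) (c : Conf V G.M.S) (A : Set (Conf V G.M.S)) : Prop :=
  ∃ b2 ≤ c.B2, ∃ w2 ∈ G.M.opts c.s, ∃ d2 : ℕ → V, (∀ b, G.E c.v (d2 b)) ∧
    ∀ b1 ≤ c.B1, ∀ w1 ∈ G.M.opts c.s, ∀ d1, G.E c.v d1 → outc G c b1 b2 w1 w2 d1 (d2 b1) ∈ A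

/-- The game with advantage-based tie-breaking. -/
abbrev advGame (E : V → V → Prop) (hsucc : ∀ v, ∃ u, E v u) (N : ℕ) (obj : (ℕ → V) → Prop) :
    Game V := ⟨E, hsucc, N, advMech V, obj⟩

/-- Twice the budget of Player 1, counting the advantage as half a unit. -/
def lvl (c : Conf V (Fin 2)) : ℤ := 2 * c.B1 + if c.s = 0 then 1 else 0

/-- `c'` is at least as good as `c` for Player 1, with the same vertex and total budget. -/
def better (c c' : Conf V (Fin 2)) : Prop :=
  c.v = c'.v ∧ c.B1 + c.B2 = c'.B1 + c'.B2 ∧ lvl c ≤ lvl c'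

/-- `X` contains a configuration at vertex `d`, with total budget `B`, of level at most `x`.  Unlike
membership in `X` this makes sense, and is monotone, for all integers `x`. -/
def InX (X : Set (Conf V (Fin 2))) (B : ℕ) (d : V) (x : ℤ) : Prop :=
  ∃ c ∈ X, c.v = d ∧ c.B1 + c.B2 = B ∧ lvl c ≤ x

lemma inX_mono {X : Set (Conf V (Fin 2))} {B : ℕ} {d : V} {x y : ℤ} (hxy : x ≤ y)
    (h : InX X B d x) : InX X B d y := by
  obtain ⟨c, h1, h2, h3, h4⟩ := h
  exact ⟨c, h1, h2, h3, h4.trans hxy⟩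

lemma mem_iff_inX {X : Set (Conf V (Fin 2))} (hX : Up better X) {c : Conf V (Fin 2)} {B : ℕ}
    {d : V} {x : ℤ} (hB : c.B1 + c.B2 = B) (hd : c.v = d) (hx : lvl c = x) :
    c ∈ X ↔ InX X B d x := by
  constructor
  · exact fun h => ⟨c, h, hd, hB, hx.le⟩
  · rintro ⟨c', h1, h2, h3, h4⟩
    exact hX c' c ⟨h2.trans hd.symm, h3.trans hB.symm, h4.trans hx.ge⟩ h1

variable {E : V → V → Prop} {hsucc : ∀ v, ∃ u, E v u} {N : ℕ} {obj : (ℕ → V) → Prop}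

/-- The outcome of a round in terms of levels. -/
lemma outc_mem {X : Set (Conf V (Fin 2))} (hX : Up better X) (c : Conf V (Fin 2)) {b1 b2 : ℕ}
    (h1 : b1 ≤ c.B1) (h2 : b2 ≤ c.B2) (w1 w2 : Fin 2) (d1 d2 : V) :
    outc (advGame E hsucc N obj) c b1 b2 w1 w2 d1 d2 ∈ X ↔
      if b2 < b1 then InX X (c.B1 + c.B2) d1 (lvl c - 2 * b1)
      else if b1 < b2 then InX X (c.B1 + c.B2) d2 (lvl c + 2 * b2)
      else if c.s = 0 then
        (if w1 = 0 then InX X (c.B1 + c.B2) d1 (lvl c - 2 * b1 - 1)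
          else InX X (c.B1 + c.B2) d2 (lvl c + 2 * b1))
      else
        (if w2 = 0 then InX X (c.B1 + c.B2) d1 (lvl c - 2 * b1)
          else InX X (c.B1 + c.B2) d2 (lvl c + 2 * b1 + 1)) := by
  obtain ⟨v, B1, B2, s⟩ := c
  dsimp only at *
  have hfin : ∀ w : Fin 2, w ≠ 0 → w = 1 := by decide
  split_ifs with i1 i2 i3 i4 i5
  all_goals
    apply mem_iff_inX hX
  all_goals
    try rw [hfin w1 ‹_›]
    try rw [hfin w2 ‹_›]
    try rw [hfin s ‹_›]
    try subst i3
    try subst i4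
    try subst i5
    simp_all [outc, nextConf, advMech, lvl, Nat.lt_asymm, ne_of_lt, ne_of_gt]
    try split_ifs <;> omega
    try omega

/-- Player 1 can move to a vertex satisfying him at level `x`. -/
def MvP (E : V → V → Prop) (X : Set (Conf V (Fin 2))) (c : Conf V (Fin 2)) (x : ℤ) : Prop :=
  ∃ d, E c.v d ∧ InX X (c.B1 + c.B2) d x

/-- Every move of Player 2 satisfies Player 1 at level `x`. -/
def MvL (E : V → V → Prop) (X : Set (Conf V (Fin 2))) (c : Conf V (Fin 2)) (x : ℤ) : Prop :=
  ∀ d, E c.v d → InX X (c.B1 + c.B2) d x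

lemma mvP_mono {X : Set (Conf V (Fin 2))} {c : Conf V (Fin 2)} (x y : ℤ) (hxy : x ≤ y)
    (h : MvP E X c x) : MvP E X c y :=
  h.imp fun _ hd => ⟨hd.1, inX_mono hxy hd.2⟩

lemma mvL_mono {X : Set (Conf V (Fin 2))} {c : Conf V (Fin 2)} (x y : ℤ) (hxy : x ≤ y)
    (h : MvL E X c x) : MvL E X c y :=
  fun d hd => inX_mono hxy (h d hd)

lemma pre1_iff {X : Set (Conf V (Fin 2))} (hX : Up better X) (c : Conf V (Fin 2)) :
    c ∈ Pre (Eff1 (advGame E hsucc N obj)) X ↔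
      ∃ b1 ≤ c.B1, ∀ b2 ≤ c.B2, Cell (MvP E X c) (MvL E X c) (c.s = 0) (lvl c) b1 b2 := by
  classical
  constructor
  · rintro ⟨A, ⟨b1, h1, w1, -, d1, hd1, hA⟩, hAX⟩
    refine ⟨b1, h1, fun b2 h2 => ?_⟩
    have key : ∀ (w2 : Fin 2) d2, E c.v d2 → _ := fun w2 d2 hd2 =>
      (outc_mem (hsucc := hsucc) (N := N) (obj := obj) hX c h1 h2 w1 w2 (d1 b2) d2).1
        (hAX (hA b2 h2 w2 (Set.mem_univ _) d2 hd2))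
    obtain ⟨d0, hd0⟩ := hsucc c.v
    refine ⟨fun hlt => ?_, fun hlt d hd => ?_, ?_⟩
    · have := key 0 d0 hd0
      rw [if_pos hlt] at this
      exact ⟨_, hd1 b2, this⟩
    · have := key 0 d hd
      rwa [if_neg (by omega), if_pos hlt] at this
    · rintro rfl
      refine ⟨fun hs => ?_, fun hs => ⟨?_, fun d hd => ?_⟩⟩
      · by_cases hw : w1 = 0
        · have := key 0 d0 hd0
          simp only [lt_irrefl, if_false, hs, if_true, hw] at this
          exact .inl ⟨_, hd1 b1, this⟩
        · refine .inr fun d hd => ?_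
          have := key 0 d hd
          simpa only [lt_irrefl, if_false, hs, if_true, hw] using this
      · have := key 0 d0 hd0
        simp only [lt_irrefl, if_false, hs, if_true] at this
        exact ⟨_, hd1 b1, this⟩
      · have := key 1 d hd
        simpa only [lt_irrefl, if_false, hs, one_ne_zero] using this
  · rintro ⟨b1, h1, hc⟩
    have hpick : ∀ x, ∃ d, E c.v d ∧ (MvP E X c x → InX X (c.B1 + c.B2) d x) := by
      intro x
      by_cases h : MvP E X c x
      · obtain ⟨d, hd, hx⟩ := h
        exact ⟨d, hd, fun _ => hx⟩
      · obtain ⟨d, hd⟩ := hsucc c.v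
        exact ⟨d, hd, fun h' => absurd h' h⟩
    choose pick hpE hpX using hpick
    refine ⟨X, ⟨b1, h1, if MvP E X c (lvl c - 2 * b1 - 1) then 0 else 1, Set.mem_univ _,
      fun b2 => pick (if b1 = b2 ∧ c.s = 0 then lvl c - 2 * b1 - 1 else lvl c - 2 * b1),
      fun b => hpE _, fun b2 h2 w2 _ d2 hd2 => ?_⟩, subset_rfl⟩
    obtain ⟨k1, k2, k3⟩ := hc b2 h2
    refine (outc_mem (hsucc := hsucc) (N := N) (obj := obj) hX c h1 h2 _ w2 _ d2).2 ?_
    rcases lt_trichotomy b1 b2 with hlt | rfl | hlt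
    · rw [if_neg (by omega), if_pos hlt]
      exact k2 hlt d2 hd2
    · by_cases hs : c.s = 0
      · have := (k3 rfl).1 hs
        by_cases hP : MvP E X c (lvl c - 2 * b1 - 1)
        · simpa [hs, hP] using hpX _ hP
        · simpa [hs, hP] using this.resolve_left hP d2 hd2
      · obtain ⟨h3, h4⟩ := (k3 rfl).2 hs
        by_cases hw : w2 = 0
        · simpa [hs, hw] using hpX _ h3
        · simpa [hs, hw] using h4 d2 hd2
    · rw [if_pos hlt]
      dsimp only
      rw [if_neg (by omega)]
      exact hpX _ (k1 hlt)

lemma pre2_of_cell {X : Set (Conf V (Fin 2))} (hX : Up better X) (c : Conf V (Fin 2))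
    (h : ∃ b2 ≤ c.B2, ∀ b1 ≤ c.B1, ¬ Cell (MvP E X c) (MvL E X c) (c.s = 0) (lvl c) b1 b2) :
    c ∈ Pre (Eff2 (advGame E hsucc N obj)) Xᶜ := by
  classical
  obtain ⟨b2, h2, hc⟩ := h
  have hpick : ∀ x, ∃ d, E c.v d ∧ (¬ MvL E X c x → ¬ InX X (c.B1 + c.B2) d x) := by
    intro x
    by_cases h : MvL E X c x
    · obtain ⟨d, hd⟩ := hsucc c.v
      exact ⟨d, hd, fun h' => absurd h h'⟩
    · have h' := h
      simp only [MvL, not_forall] at h'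
      obtain ⟨d, hd, hx⟩ := h'
      exact ⟨d, hd, fun _ => hx⟩
  choose pick hpE hpX using hpick
  refine ⟨Xᶜ, ⟨b2, h2, if MvL E X c (lvl c + 2 * b2 + 1) then 0 else 1, Set.mem_univ _,
    fun b1 => pick (if b1 = b2 ∧ c.s ≠ 0 then lvl c + 2 * b2 + 1 else lvl c + 2 * b2),
    fun b => hpE _, fun b1 h1 w1 _ d1 hd1 => ?_⟩, subset_rfl⟩
  intro hmem
  have hm := (outc_mem (hsucc := hsucc) (N := N) (obj := obj) hX c h1 h2 w1 _ d1 _).1 hmem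
  refine hc b1 h1 ⟨fun hlt => ?_, fun hlt => ?_, ?_⟩
  · rw [if_pos hlt] at hm
    exact ⟨d1, hd1, hm⟩
  · rw [if_neg (by omega), if_pos hlt] at hm
    dsimp only at hm
    rw [if_neg (by omega)] at hm
    by_contra hL
    exact hpX _ hL hm
  · rintro rfl
    refine ⟨fun hs => ?_, fun hs => ?_⟩
    · by_cases hw : w1 = 0
      · simp only [lt_irrefl, if_false, hs, if_true, hw] at hm
        exact .inl ⟨d1, hd1, hm⟩
      · simp only [lt_irrefl, if_false, hs, if_true, hw, ne_eq, not_true, and_false] at hm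
        refine .inr ?_
        by_contra hL
        exact hpX _ hL hm
    · by_cases hL : MvL E X c (lvl c + 2 * b1 + 1)
      · simp only [lt_irrefl, if_false, hs, if_true, hL] at hm
        exact ⟨⟨d1, hd1, hm⟩, hL⟩
      · simp only [lt_irrefl, if_false, hs, hL, one_ne_zero, ne_eq, not_false_eq_true,
          and_self, if_true] at hm
        exact absurd hm (hpX _ hL)

/-- Bidding with advantage-based tie-breaking is locally determined on upward closed sets. -/
lemma adv_arena : Arena (fun c : Conf V (Fin 2) => c.v) (Eff1 (advGame E hsucc N obj))
    (Eff2 (advGame E hsucc N obj)) better where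
  ne1 c := by
    have ⟨f, hf⟩ := Classical.axiomOfChoice hsucc
    exact ⟨Set.univ, 0, Nat.zero_le _, 0, Set.mem_univ _, fun _ => f c.v, fun _ => hf _,
      fun _ _ _ _ _ _ => Set.mem_univ _⟩
  ne2 c := by
    have ⟨f, hf⟩ := Classical.axiomOfChoice hsucc
    exact ⟨Set.univ, 0, Nat.zero_le _, 0, Set.mem_univ _, fun _ => f c.v, fun _ => hf _,
      fun _ _ _ _ _ _ => Set.mem_univ _⟩
  pre_up X hX := by
    rintro c c' ⟨hv, hB, hl⟩ hc
    obtain ⟨b1, h1, hc⟩ := (pre1_iff hX c).1 hc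
    refine (pre1_iff hX c').2 ?_
    have eP : MvP E X c' = MvP E X c := by unfold MvP; rw [hv, hB]
    have eL : MvL E X c' = MvL E X c := by unfold MvL; rw [hv, hB]
    rw [eP, eL]
    have hl' := hl
    unfold lvl at hl'
    refine ⟨b1, ?_, cell_mono mvP_mono mvL_mono
      (fun x h => ?_) hl ?_ ?_ ?_ hc⟩
    · split_ifs at hl' <;> omega
    · obtain ⟨d, hd⟩ := hsucc c.v
      exact ⟨d, hd, h d hd⟩
    · split_ifs at hl' <;> omega
    · intro hs' hs
      simp only [lvl, hs, hs', if_true, if_false] at hl' ⊢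
      omega
    · intro hs hs'
      simp only [lvl, hs, hs', if_true, if_false] at hl' ⊢
      omega
  pre_dual X hX := by
    ext c
    constructor
    · rintro ⟨A, ⟨b2, h2, w2, hw2, d2, hd2, hA⟩, hAX⟩ ⟨A', ⟨b1, h1, w1, hw1, d1, hd1, hA'⟩, hAX'⟩
      exact hAX (hA b1 h1 w1 hw1 _ (hd1 b2)) (hAX' (hA' b2 h2 w2 hw2 _ (hd2 b1)))
    · intro hc
      have hc := fun h => hc ((pre1_iff hX c).2 h)
      exact pre2_of_cell hX c ((cell_det mvP_mono mvL_mono (fun x h => by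
        obtain ⟨d, hd⟩ := hsucc c.v
        exact ⟨d, hd, h d hd⟩) _ _ _ _).resolve_left hc)
  r_v _ _ h := h.1

/-! ### From arena strategies to bidding strategies -/

/-- The configurations of a play recorded in a history, together with the current one, form its
`track`. -/
lemma playAux_track (G : Game V) (σ1 σ2 : Strat V G.M) (c : Conf V G.M.S) (n : ℕ) :
    (playAux G σ1 σ2 c n).2 :: ((playAux G σ1 σ2 c n).1.map Prod.fst).reverse =
      track (fun k => (playAux G σ1 σ2 c k).2) n := by
  induction n with
  | zero => rfl
  | succ n ih =>
    rw [track, ← ih]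
    simp [playAux, stepPlay]

lemma hasWin_one {G : Game V} {c : Conf V G.M.S} {σ : List (Conf V G.M.S) → Set (Conf V G.M.S)}
    (hσ : ∀ q h, Eff1 G q (σ (q :: h)))
    (hw : ∀ p : ℕ → Conf V G.M.S, p 0 = c → (∀ n, p (n + 1) ∈ σ (track p n)) →
      G.obj (fun n => (p n).v)) : HasWin G 0 c := by
  choose b hb w hwo d hd hA using hσ
  let past : Hist V G.M.S → List (Conf V G.M.S) := fun h => (h.map Prod.fst).reverse
  refine ⟨⟨fun h c => b c (past h), fun h c _ => w c (past h), fun h c _ b2 => d c (past h) b2⟩,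
    ⟨fun h c => hb c _, fun h c _ => hwo c _, fun h c _ b2 => hd c _ b2⟩, fun τ hτ => ?_⟩
  obtain ⟨t1, t2, t3⟩ := hτ
  rw [if_pos rfl]
  refine hw (fun n => (playAux G _ τ c n).2) rfl fun n => ?_
  rw [← playAux_track]
  exact hA _ _ _ (t1 _ _) _ (t2 _ _ _) _ (t3 _ _ _ _)

lemma hasWin_two {G : Game V} {c : Conf V G.M.S} {σ : List (Conf V G.M.S) → Set (Conf V G.M.S)}
    (hσ : ∀ q h, Eff2 G q (σ (q :: h)))
    (hw : ∀ p : ℕ → Conf V G.M.S, p 0 = c → (∀ n, p (n + 1) ∈ σ (track p n)) →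
      ¬ G.obj (fun n => (p n).v)) : HasWin G 1 c := by
  choose b hb w hwo d hd hA using hσ
  let past : Hist V G.M.S → List (Conf V G.M.S) := fun h => (h.map Prod.fst).reverse
  refine ⟨⟨fun h c => b c (past h), fun h c _ => w c (past h), fun h c b1 _ => d c (past h) b1⟩,
    ⟨fun h c => hb c _, fun h c _ => hwo c _, fun h c b1 _ => hd c _ b1⟩, fun τ hτ => ?_⟩
  obtain ⟨t1, t2, t3⟩ := hτ
  rw [if_neg one_ne_zero]
  refine hw (fun n => (playAux G τ _ c n).2) rfl fun n => ?_
  rw [← playAux_track]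
  exact hA _ _ _ (t1 _ _) _ (t2 _ _ _) _ (t3 _ _ _ _)

end Game

end Bid

open Bid in
/-- Every discrete bidding game with a Müller objective and
advantage-based tie-breaking is determined: from every configuration, either
Player 1 or Player 2 has a winning strategy. -/
theorem stmt_18 {V : Type} [Fintype V] (E : V → V → Prop)
    (hsucc : ∀ v, ∃ u, E v u) (N : ℕ) (F : Set (Set V)) :
    let G : Game V := ⟨E, hsucc, N, advMech V,
      fun p => {u : V | ∀ m : ℕ, ∃ n ≥ m, p n = u} ∈ F⟩
    ∀ c : Conf V (Fin 2), c.B1 + c.B2 = N → HasWin G 0 c ∨ HasWin G 1 c := by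
  intro G c _
  -- with `U = univ` the game is never stopped, so the decision set plays no role
  obtain ⟨K, -, ⟨σ, hσ, hw⟩, ⟨σ', hσ', hw'⟩⟩ :=
    (adv_arena (E := E) (hsucc := hsucc) (N := N) (obj := G.obj)).det F Set.univ Set.univ
      (fun _ _ _ _ => Set.mem_univ _)
  by_cases hc : c ∈ K
  · refine .inl (hasWin_one (G := G) hσ fun p hp hp' => ?_)
    exact (hw p (by rwa [hp]) fun n _ => hp' n).1 fun _ => Set.mem_univ _
  · refine .inr (hasWin_two (G := G) hσ' fun p hp hp' => ?_)
    exact (hw' p (by rwa [hp]) fun n _ => hp' n).1 fun _ => Set.mem_univ _
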